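/- Every element of F of the form P/Q, with P ∈ R and Q a nonzero finite product of polynomials of total degree at most one, can be written as a finite sum Σ A(μ,u)·Φ(μ,u), where the sum ranges over pairs (μ,u) with μ : {0,…,d} → ℤ satisfying Σ_k μ(k) = 0 and u ∈ U({k : μ(k) ≥ 0}), and A(μ,u) ∈ K; moreover, the coefficients A(μ,u) in such an expression are uniquely determined (i.e. the family (Φ(μ,u)) over this index set is K-linearly independent). -/

import Mathlib

/-- The inhomogeneous linear form ℓ_k^u = x_k + Σ_{k<i≤d−1} u_{ik}·x_i + u_{dk}. -/
noncomputable def PFDell (K : Type) [Field K] (d : ℕ)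
    (u : Matrix (Fin (d+1)) (Fin (d+1)) K) (k : Fin d) : MvPolynomial (Fin d) K :=
  MvPolynomial.X k +
    (∑ i ∈ Finset.univ.filter (fun i => k < i),
      MvPolynomial.C (u i.castSucc k.castSucc) * MvPolynomial.X i) +
    MvPolynomial.C (u (Fin.last d) k.castSucc)

/-- Φ(μ,u) = ∏_{k=0}^{d−1} (ℓ_k^u)^{μ(k)}, the inhomogeneous form of u_*Ξ_μ. -/
noncomputable def PFDPhi (K : Type) [Field K] (d : ℕ) (μ : Fin (d+1) → ℤ)
    (u : Matrix (Fin (d+1)) (Fin (d+1)) K) :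
    FractionRing (MvPolynomial (Fin d) K) :=
  ∏ k : Fin d,
    (algebraMap (MvPolynomial (Fin d) K) (FractionRing (MvPolynomial (Fin d) K))
      (PFDell K d u k)) ^ (μ k.castSucc)

/-- The index set: pairs (μ,u) with Σ_k μ(k) = 0 and u a lower triangular unipotent
matrix lying in U({k : μ(k) ≥ 0}), i.e. u_{ij} = 0 whenever i > j and μ(j) ≥ 0. -/
def PFDvalid (K : Type) [Field K] (d : ℕ)
    (p : (Fin (d+1) → ℤ) × Matrix (Fin (d+1)) (Fin (d+1)) K) : Prop :=
  (∑ k, p.1 k) = 0 ∧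
  (∀ i, p.2 i i = 1) ∧ (∀ i j : Fin (d+1), i < j → p.2 i j = 0) ∧
  (∀ i j : Fin (d+1), j < i → 0 ≤ p.1 j → p.2 i j = 0)

open Polynomial in
theorem pfd_one_var {L F : Type*} [Field L] [Field F] [Algebra L F] (t : F)
    (ht : Transcendental L t) :
    LinearIndependent L (fun p : {p : ℤ × L // 0 ≤ p.1 → p.2 = 0} =>
      (t + algebraMap L F p.1.2) ^ p.1.1) := by
  classical
  have hne : ∀ l : L, t + algebraMap L F l ≠ 0 := by
    intro l h
    apply ht
    refine ⟨X + C l, X_add_C_ne_zero l, by simpa using h⟩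
  rw [linearIndependent_iff']
  intro s a hs
  by_contra hcon
  push Not at hcon
  -- restrict to the support
  set s' := s.filter (fun i => a i ≠ 0) with hs'
  have hne' : s'.Nonempty := by
    obtain ⟨i, hi, hai⟩ := hcon
    exact ⟨i, by simp [hs', hi, hai]⟩
  have hsum : ∑ i ∈ s', a i • (t + algebraMap L F i.1.2) ^ i.1.1 = 0 := by
    rw [← hs, hs', Finset.sum_filter]
    apply Finset.sum_congr rfl
    intro i _
    split_ifs with h
    · rfl
    · push Not at h; simp [h]
  obtain ⟨i0, hi0, hmin⟩ := s'.exists_min_image (fun i => i.1.1) hne'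
  have ha0 : a i0 ≠ 0 := by simp [hs'] at hi0; exact hi0.2
  obtain ⟨m, hm, hmpos⟩ : ∃ m : ℕ, (∀ i ∈ s', 0 ≤ i.1.1 + m) ∧
      ((i0.1.1 + m = 0 ∧ 0 < m) ∨ (m = 0 ∧ 0 ≤ i0.1.1)) := by
    by_cases h : 0 ≤ i0.1.1
    · exact ⟨0, fun i hi => by have := hmin i hi; push_cast; omega, Or.inr ⟨rfl, h⟩⟩
    · refine ⟨(-i0.1.1).toNat, fun i hi => by have := hmin i hi; omega, Or.inl ⟨by omega, by omega⟩⟩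
  set S := s'.image (fun i => i.1.2) with hS
  let p : {p : ℤ × L // 0 ≤ p.1 → p.2 = 0} → L[X] := fun i =>
    (X + C i.1.2) ^ (i.1.1 + m).toNat * ∏ l ∈ S.erase i.1.2, (X + C l) ^ m
  have hp : ∀ i ∈ s', aeval t (p i) =
      (t + algebraMap L F i.1.2) ^ i.1.1 * ∏ l ∈ S, (t + algebraMap L F l) ^ m := by
    intro i hi
    have hiS : i.1.2 ∈ S := Finset.mem_image_of_mem (fun i => i.1.2) hi
    rw [← Finset.mul_prod_erase S _ hiS, ← mul_assoc]
    simp only [p, map_mul, map_pow, map_prod, map_add, aeval_X, aeval_C]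
    congr 1
    rw [← zpow_natCast, ← zpow_natCast, ← zpow_add₀ (hne _), Int.toNat_of_nonneg (hm i hi)]
  have hz : ∑ i ∈ s', C (a i) * p i = 0 := by
    rw [transcendental_iff_injective] at ht
    apply ht
    rw [map_zero, map_sum]
    have : ∀ i ∈ s', aeval t (C (a i) * p i) =
        (a i • (t + algebraMap L F i.1.2) ^ i.1.1) * ∏ l ∈ S, (t + algebraMap L F l) ^ m := by
      intro i hi
      rw [map_mul, hp i hi, aeval_C, Algebra.smul_def, mul_assoc]
    rw [Finset.sum_congr rfl this, ← Finset.sum_mul, hsum, zero_mul]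
  rcases hmpos with ⟨h0, hmp⟩ | ⟨rfl, h0⟩
  · have he := congrArg (eval (-i0.1.2)) hz
    rw [eval_finsetSum, Finset.sum_eq_single_of_mem i0 hi0] at he
    · simp only [p, h0, eval_mul, eval_C, eval_prod, eval_pow, eval_add, eval_X] at he
      simp only [Int.toNat_zero, pow_zero, one_mul, eval_zero, mul_eq_zero, ha0, false_or] at he
      rw [Finset.prod_eq_zero_iff] at he
      obtain ⟨l, hl, h⟩ := he
      have := pow_eq_zero_iff (by omega : m ≠ 0) |>.1 h
      exact (Finset.mem_erase.1 hl).1 (by linear_combination this)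
    · intro i hi hii
      simp only [p, eval_mul, eval_C, eval_prod, eval_pow, eval_add, eval_X, mul_eq_zero]
      right
      by_cases hl : i.1.2 = i0.1.2
      · left
        rw [hl, neg_add_cancel]
        apply zero_pow
        have h1 := hmin i hi
        have h2 : i.1.1 ≠ i0.1.1 := fun h => hii (Subtype.ext (Prod.ext h hl))
        omega
      · right
        apply Finset.prod_eq_zero (i := i0.1.2)
        · exact Finset.mem_erase.2 ⟨fun h => hl h.symm, Finset.mem_image_of_mem (fun i => i.1.2) hi0⟩
        · rw [neg_add_cancel, zero_pow (by omega)]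
  · have he := congrArg (fun q => coeff q i0.1.1.toNat) hz
    have hl0 : ∀ i ∈ s', i.1.2 = 0 := fun i hi => i.2 (by simpa using hm i hi)
    simp only [finsetSum_coeff, coeff_zero] at he
    rw [Finset.sum_eq_single_of_mem i0 hi0] at he
    · simp [p, hl0 i0 hi0, ha0] at he
    · intro i hi hii
      simp only [p, hl0 i hi]
      simp [coeff_X_pow]
      intro h
      exfalso
      apply hii
      have h1 := hm i hi
      have h2 := hmin i hi
      apply Subtype.ext
      refine Prod.ext ?_ (by rw [hl0 i hi, hl0 i0 hi0])
      simp at h1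
      omega
open scoped IntermediateField.algebraAdjoinAdjoin in
theorem pfd_trans {K F : Type*} [Field K] [Field F] [Algebra K F] {n : ℕ} (x : Fin (n+1) → F)
    (hx : AlgebraicIndependent K x) :
    Transcendental (IntermediateField.adjoin K (Set.range (Fin.tail x))) (x 0) := by
  have h := hx.transcendental_adjoin (s := Set.range Fin.succ) (i := 0) (by simp)
  rw [← Set.range_comp] at h
  change Transcendental (Algebra.adjoin K (Set.range (Fin.tail x))) (x 0) at h
  intro h'
  apply h
  exact (IsFractionRing.isAlgebraic_iff (Algebra.adjoin K (Set.range (Fin.tail x))) (IntermediateField.adjoin K (Set.range (Fin.tail x))) F).2 h'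

/-- span of 1 and the coordinates -/
def pfdV {K F : Type*} [Field K] [Field F] [Algebra K F] {n : ℕ} (x : Fin n → F) :
    Submodule K F := Submodule.span K (insert 1 (Set.range x))

/-- span of 1 and the coordinates after k -/
def pfdW {K F : Type*} [Field K] [Field F] [Algebra K F] {n : ℕ} (x : Fin n → F) (k : Fin n) :
    Submodule K F := Submodule.span K (insert 1 (x '' Set.Ioi k))

/-- valid index data -/
def pfdG (K : Type*) {F : Type*} [Field K] [Field F] [Algebra K F] {n : ℕ} (x : Fin n → F)
    (g : Fin n → ℤ × F) : Prop :=
  ∀ k, (g k).2 ∈ pfdW (K := K) x k ∧ (0 ≤ (g k).1 → (g k).2 = 0)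

theorem pfdW_zero {K F : Type*} [Field K] [Field F] [Algebra K F] {n : ℕ} (x : Fin (n+1) → F) :
    pfdW (K := K) x 0 = pfdV (Fin.tail x) := by
  unfold pfdW pfdV
  congr 2
  ext y
  simp only [Set.mem_image, Set.mem_Ioi, Set.mem_range]
  constructor
  · rintro ⟨i, hi, rfl⟩
    obtain ⟨j, rfl⟩ := Fin.exists_succ_eq.2 hi.ne'
    exact ⟨j, rfl⟩
  · rintro ⟨j, rfl⟩
    exact ⟨j.succ, Fin.succ_pos j, rfl⟩

theorem pfdW_succ {K F : Type*} [Field K] [Field F] [Algebra K F] {n : ℕ} (x : Fin (n+1) → F)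
    (k : Fin n) : pfdW (K := K) x k.succ = pfdW (Fin.tail x) k := by
  unfold pfdW
  congr 2
  ext y
  simp only [Set.mem_image, Set.mem_Ioi]
  constructor
  · rintro ⟨i, hi, rfl⟩
    obtain ⟨j, rfl⟩ := Fin.exists_succ_eq.2 (Fin.ne_zero_of_lt hi)
    exact ⟨j, Fin.succ_lt_succ_iff.1 hi, rfl⟩
  · rintro ⟨j, hj, rfl⟩
    exact ⟨j.succ, Fin.succ_lt_succ_iff.2 hj, rfl⟩

theorem pfdG_cons {K F : Type*} [Field K] [Field F] [Algebra K F] {n : ℕ} (x : Fin (n+1) → F)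
    (g : Fin (n+1) → ℤ × F) :
    pfdG K x g ↔ ((g 0).2 ∈ pfdV (K := K) (Fin.tail x) ∧ (0 ≤ (g 0).1 → (g 0).2 = 0)) ∧
      pfdG K (Fin.tail x) (Fin.tail g) := by
  unfold pfdG
  rw [Fin.forall_fin_succ, pfdW_zero]
  simp only [pfdW_succ, Fin.tail]

theorem pfdV_le_adjoin {K F : Type*} [Field K] [Field F] [Algebra K F] {n : ℕ} (x : Fin n → F)
    {y : F} (hy : y ∈ pfdV (K := K) x) : y ∈ IntermediateField.adjoin K (Set.range x) := by
  have : pfdV (K := K) x ≤ (IntermediateField.adjoin K (Set.range x)).toSubalgebra.toSubmodule := by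
    unfold pfdV
    rw [Submodule.span_le]
    rintro z (rfl | hz)
    · exact one_mem (IntermediateField.adjoin K (Set.range x))
    · exact IntermediateField.subset_adjoin K _ hz
  exact this hy

theorem pfdW_le_pfdV {K F : Type*} [Field K] [Field F] [Algebra K F] {n : ℕ} (x : Fin n → F)
    (k : Fin n) : pfdW (K := K) x k ≤ pfdV x :=
  Submodule.span_mono (Set.insert_subset_insert (Set.image_subset_range _ _))

theorem pfd_linearIndependent {K F : Type*} [Field K] [Field F] [Algebra K F] {n : ℕ}
    (x : Fin n → F) (hx : AlgebraicIndependent K x) :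
    LinearIndependent K (fun g : {g : Fin n → ℤ × F // pfdG K x g} =>
      ∏ k, (x k + (g.1 k).2) ^ (g.1 k).1) := by
  induction n with
  | zero =>
    have : Subsingleton {g : Fin 0 → ℤ × F // pfdG K x g} := inferInstance
    rw [linearIndependent_subsingleton_index_iff]
    simp
  | succ n ih =>
    have ht := pfd_trans x hx
    have hx' : AlgebraicIndependent K (Fin.tail x) := hx.comp _ (Fin.succ_injective n)
    have ih' := ih _ hx'
    set L := IntermediateField.adjoin K (Set.range (Fin.tail x)) with hL
    have h1 := pfd_one_var (x 0) ht
    have hmem : ∀ g : {g : Fin n → ℤ × F // pfdG K (Fin.tail x) g},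
        (∏ k, (Fin.tail x k + (g.1 k).2) ^ (g.1 k).1) ∈ L := by
      intro g
      refine prod_mem fun k _ => zpow_mem (add_mem ?_ ?_) _
      · exact IntermediateField.subset_adjoin K _ ⟨k, rfl⟩
      · exact pfdV_le_adjoin _ (pfdW_le_pfdV _ k (g.2 k).1)
    have h2 : LinearIndependent K (fun g : {g : Fin n → ℤ × F // pfdG K (Fin.tail x) g} =>
        (⟨_, hmem g⟩ : L)) := by
      apply LinearIndependent.of_comp (L.val.toLinearMap)
      exact ih'
    have h3 := linearIndependent_smul h2 h1
    let φ : {g : Fin (n+1) → ℤ × F // pfdG K x g} →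
        {g : Fin n → ℤ × F // pfdG K (Fin.tail x) g} × {p : ℤ × L // 0 ≤ p.1 → p.2 = 0} :=
      fun g => (⟨Fin.tail g.1, ((pfdG_cons x g.1).1 g.2).2⟩,
        ⟨((g.1 0).1, ⟨(g.1 0).2, pfdV_le_adjoin _ ((pfdG_cons x g.1).1 g.2).1.1⟩),
          fun h => Subtype.ext (((pfdG_cons x g.1).1 g.2).1.2 h)⟩)
    have hφ : Function.Injective φ := by
      intro g g' h
      simp only [φ, Prod.mk.injEq, Subtype.mk.injEq] at h
      obtain ⟨h1, h2, h3⟩ := h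
      apply Subtype.ext
      rw [← Fin.cons_self_tail g.1, ← Fin.cons_self_tail g'.1, h1, Prod.ext h2 h3]
    have h4 := h3.comp φ hφ
    convert h4 using 2 with g
    simp only [Function.comp, φ, Fin.prod_univ_succ, Algebra.smul_def, Fin.tail]
    rw [mul_comm]
    rfl

/-- The algebra generated by coordinates and inverses of affine forms -/
def pfdA (K : Type*) {F : Type*} [Field K] [Field F] [Algebra K F] {n : ℕ} (x : Fin n → F) :
    Subalgebra K F :=
  Algebra.adjoin K (Set.range x ∪ {y | ∃ l ∈ pfdV (K := K) x, y = l⁻¹})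

theorem pfdV_le_pfdA {K F : Type*} [Field K] [Field F] [Algebra K F] {n : ℕ} (x : Fin n → F)
    {y : F} (hy : y ∈ pfdV (K := K) x) : y ∈ pfdA K x := by
  have : pfdV (K := K) x ≤ (pfdA K x).toSubmodule := by
    unfold pfdV
    rw [Submodule.span_le]
    rintro z (rfl | hz)
    · exact one_mem (pfdA K x)
    · exact Algebra.subset_adjoin (Or.inl hz)
  exact this hy

theorem pfdV_inv_mem {K F : Type*} [Field K] [Field F] [Algebra K F] {n : ℕ} (x : Fin n → F)
    {y : F} (hy : y ∈ pfdV (K := K) x) : y⁻¹ ∈ pfdA K x :=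
  Algebra.subset_adjoin (Or.inr ⟨y, hy, rfl⟩)

/-- Closure of the span of partial fractions in one variable under multiplication. -/
theorem pfd_closed {K F : Type*} [Field K] [Field F] [Algebra K F] (A : Subalgebra K F)
    (V : Submodule K F) (hVA : ∀ l ∈ V, l ∈ A) (hVi : ∀ l ∈ V, l⁻¹ ∈ A) (t : F)
    (hne : ∀ l ∈ V, t + l ≠ 0) (M : Submodule K F)
    (hM : M = Submodule.span K {y | ∃ (m : ℤ) (l : F) (a : F), l ∈ V ∧ (0 ≤ m → l = 0) ∧ a ∈ A ∧
      y = (t + l) ^ m * a}) :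
    1 ∈ M ∧ (∀ a ∈ A, ∀ y ∈ M, a * y ∈ M) ∧ (∀ y ∈ M, t * y ∈ M) ∧
      (∀ l ∈ V, ∀ y ∈ M, (t + l)⁻¹ * y ∈ M) := by
  have hgen : ∀ (m : ℤ) (l a : F), l ∈ V → (0 ≤ m → l = 0) → a ∈ A → (t + l) ^ m * a ∈ M := by
    intro m l a h1 h2 h3
    rw [hM]
    exact Submodule.subset_span ⟨m, l, a, h1, h2, h3, rfl⟩
  have hred : ∀ (c : F), (∀ (m : ℤ) (l a : F), l ∈ V → (0 ≤ m → l = 0) → a ∈ A →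
      c * ((t + l) ^ m * a) ∈ M) → ∀ y ∈ M, c * y ∈ M := by
    intro c hc y hy
    rw [hM] at hy
    induction hy using Submodule.span_induction with
    | mem y hy =>
      obtain ⟨m, l, a, h1, h2, h3, rfl⟩ := hy
      exact hc m l a h1 h2 h3
    | zero => simp
    | add y z _ _ h1 h2 => rw [mul_add]; exact add_mem h1 h2
    | smul r y _ h => rw [mul_smul_comm]; exact M.smul_mem r h
  have hA : ∀ a ∈ A, ∀ y ∈ M, a * y ∈ M := by
    intro a ha
    apply hred
    intro m l b h1 h2 h3
    rw [mul_left_comm]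
    exact hgen m l _ h1 h2 (mul_mem ha h3)
  have hpow : ∀ n : ℕ, t ^ n ∈ M := by
    intro n
    simpa using hgen n 0 1 V.zero_mem (fun _ => rfl) (one_mem _)
  have hone : (1 : F) ∈ M := by simpa using hpow 0
  have hnegp : ∀ (n : ℕ) (l : F), l ∈ V → (t + l)⁻¹ ^ n ∈ M := by
    intro n l hl
    rcases n.eq_zero_or_pos with rfl | hn
    · simpa using hone
    · simpa using hgen (-n) l 1 hl (by omega) (one_mem _)
  have hred' : ∀ (c : F), (∀ n : ℕ, c * t ^ n ∈ M) →
      (∀ (n : ℕ) (l : F), l ∈ V → c * (t + l)⁻¹ ^ (n + 1) ∈ M) → ∀ y ∈ M, c * y ∈ M := by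
    intro c h1 h2
    apply hred
    intro m l a hl hm ha
    rw [← mul_assoc, mul_comm]
    apply hA a ha
    rcases le_or_gt 0 m with h | h
    · obtain ⟨n, rfl⟩ := Int.eq_ofNat_of_zero_le h
      simpa [hm h] using h1 n
    · obtain ⟨n, rfl⟩ : ∃ n : ℕ, m = -((n + 1 : ℕ) : ℤ) := ⟨(-m - 1).toNat, by omega⟩
      rw [zpow_neg, zpow_natCast, ← inv_pow]
      exact h2 n l hl
  refine ⟨hone, hA, ?_, ?_⟩
  · apply hred'
    · intro n
      rw [← pow_succ']
      exact hpow _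
    · intro n l hl
      have h0 := hne l hl
      have : t * (t + l)⁻¹ ^ (n + 1) = (t + l)⁻¹ ^ n - l * (t + l)⁻¹ ^ (n + 1) := by
        rw [pow_succ]
        field_simp
        ring
      rw [this]
      exact sub_mem (hnegp _ _ hl) (hA _ (hVA l hl) _ (hnegp _ _ hl))
  · intro l hl
    have h0 := hne l hl
    apply hred'
    · intro n
      induction n with
      | zero => simpa using hnegp 1 l hl
      | succ n ih =>
        have : (t + l)⁻¹ * t ^ (n + 1) = t ^ n - l * ((t + l)⁻¹ * t ^ n) := by
          field_simp
          ring
        rw [this]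
        exact sub_mem (hpow _) (hA _ (hVA l hl) _ ih)
    · intro n l' hl'
      by_cases hll : l = l'
      · subst hll
        rw [← pow_succ']
        exact hnegp _ _ hl
      have h0' := hne l' hl'
      have hd : l - l' ≠ 0 := sub_ne_zero.2 hll
      suffices h : ∀ n : ℕ, (t + l)⁻¹ * (t + l')⁻¹ ^ n ∈ M from h _
      intro n
      induction n with
      | zero => simpa using hnegp 1 l hl
      | succ n ih =>
        have : (t + l)⁻¹ * (t + l')⁻¹ ^ (n + 1) =
            (l - l')⁻¹ * ((t + l')⁻¹ ^ (n + 1) - (t + l)⁻¹ * (t + l')⁻¹ ^ n) := by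
          rw [pow_succ]
          field_simp
          ring
        rw [this]
        exact hA _ (hVi _ (sub_mem hl hl')) _ (sub_mem (hnegp _ _ hl') ih)

theorem pfd_span {K F : Type*} [Field K] [Field F] [Algebra K F] {n : ℕ}
    (x : Fin n → F) (hx : AlgebraicIndependent K x) (y : F) (hy : y ∈ pfdA K x) :
    y ∈ Submodule.span K {y | ∃ g : Fin n → ℤ × F, pfdG K x g ∧
      y = ∏ k, (x k + (g k).2) ^ (g k).1} := by
  induction n generalizing y with
  | zero =>
    set S := Submodule.span K {y | ∃ g : Fin 0 → ℤ × F, pfdG K x g ∧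
      y = ∏ k, (x k + (g k).2) ^ (g k).1} with hS
    have h1 : (1 : F) ∈ S := Submodule.subset_span ⟨fun k => k.elim0, fun k => k.elim0, by simp⟩
    have hK : ∀ c : K, algebraMap K F c ∈ S := by
      intro c
      rw [Algebra.algebraMap_eq_smul_one]
      exact S.smul_mem c h1
    have hbot : pfdA K x ≤ ⊥ := by
      unfold pfdA
      rw [Algebra.adjoin_le_iff]
      rintro z (⟨i, _⟩ | ⟨l, hl, rfl⟩)
      · exact i.elim0
      · unfold pfdV at hl
        rw [Set.range_eq_empty, insert_empty_eq, Submodule.mem_span_singleton] at hl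
        obtain ⟨c, rfl⟩ := hl
        exact Algebra.mem_bot.2 ⟨c⁻¹, by simp [Algebra.smul_def]⟩
    obtain ⟨c, rfl⟩ := Algebra.mem_bot.1 (hbot hy)
    exact hK c
  | succ n ih =>
    have ht := pfd_trans x hx
    have hx' : AlgebraicIndependent K (Fin.tail x) := hx.comp _ (Fin.succ_injective n)
    have ih' := ih _ hx'
    have hne : ∀ l ∈ pfdV (K := K) (Fin.tail x), x 0 + l ≠ 0 := by
      intro l hl h
      apply ht
      have : x 0 = algebraMap (IntermediateField.adjoin K (Set.range (Fin.tail x))) F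
          ⟨-l, neg_mem (pfdV_le_adjoin _ hl)⟩ := eq_neg_of_add_eq_zero_left h
      rw [this]
      exact isAlgebraic_algebraMap _
    obtain ⟨h1, h2, h3, h4⟩ := pfd_closed (pfdA K (Fin.tail x)) (pfdV (Fin.tail x))
      (fun l hl => pfdV_le_pfdA _ hl) (fun l hl => pfdV_inv_mem _ hl) (x 0) hne _ rfl
    set M := Submodule.span K {y | ∃ (m : ℤ) (l : F) (a : F), l ∈ pfdV (K := K) (Fin.tail x) ∧
      (0 ≤ m → l = 0) ∧ a ∈ pfdA K (Fin.tail x) ∧ y = (x 0 + l) ^ m * a} with hM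
    have key : ∀ a ∈ pfdA K x, ∀ y ∈ M, a * y ∈ M := by
      intro a ha
      unfold pfdA at ha
      induction ha using Algebra.adjoin_induction with
      | algebraMap c =>
        intro y hy
        rw [← Algebra.smul_def]
        exact M.smul_mem c hy
      | add a b _ _ iha ihb =>
        intro y hy
        rw [add_mul]
        exact add_mem (iha y hy) (ihb y hy)
      | mul a b _ _ iha ihb =>
        intro y hy
        rw [mul_assoc]
        exact iha _ (ihb y hy)
      | mem a ha =>
        rcases ha with ⟨i, rfl⟩ | ⟨l, hl, rfl⟩
        · rcases Fin.eq_zero_or_eq_succ i with rfl | ⟨j, rfl⟩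
          · exact h3
          · exact h2 _ (Algebra.subset_adjoin (Or.inl ⟨j, rfl⟩))
        · obtain ⟨c, l', hl', rfl⟩ : ∃ (c : K) (l' : F), l' ∈ pfdV (K := K) (Fin.tail x) ∧
              l = c • x 0 + l' := by
            have : insert 1 (Set.range x) = insert (x 0) (insert 1 (Set.range (Fin.tail x))) := by
              rw [Set.insert_comm]
              congr 1
              rw [← Fin.cons_self_tail x, Fin.range_cons]
              rfl
            unfold pfdV at hl
            rw [this, Submodule.mem_span_insert] at hl
            obtain ⟨c, z, hz, rfl⟩ := hl
            exact ⟨c, z, hz, rfl⟩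
          by_cases hc : c = 0
          · subst hc
            rw [zero_smul, zero_add]
            exact h2 _ (pfdV_inv_mem _ hl')
          · have hcl : c⁻¹ • l' ∈ pfdV (K := K) (Fin.tail x) := Submodule.smul_mem _ _ hl'
            have : (c • x 0 + l')⁻¹ = c⁻¹ • (x 0 + c⁻¹ • l')⁻¹ := by
              have e : c • x 0 + l' = c • (x 0 + c⁻¹ • l') := by
                rw [smul_add, smul_inv_smul₀ hc]
              rw [e, Algebra.smul_def c, Algebra.smul_def c⁻¹ (_)⁻¹, mul_inv, map_inv₀]
            intro y hy
            rw [this, smul_mul_assoc]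
            exact M.smul_mem _ (h4 _ hcl y hy)
    have hyM : y ∈ M := by simpa using key y hy 1 h1
    refine (Submodule.span_le.2 ?_ : M ≤ _) hyM
    rintro z ⟨m, l, a, hl, hm, ha, rfl⟩
    have ha' := ih' a ha
    clear hyM ha hy
    simp only [SetLike.mem_coe]
    induction ha' using Submodule.span_induction with
    | mem a ha =>
      obtain ⟨g, hg, rfl⟩ := ha
      refine Submodule.subset_span ⟨Fin.cons (m, l) g, ?_, ?_⟩
      · rw [pfdG_cons]
        exact ⟨⟨hl, hm⟩, hg⟩
      · rw [Fin.prod_univ_succ]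
        simp [Fin.tail]
    | zero => simp
    | add a b _ _ h1 h2 => rw [mul_add]; exact add_mem h1 h2
    | smul r b _ h => rw [mul_smul_comm]; exact Submodule.smul_mem _ r h


/-- the coordinate functions in the fraction field -/
noncomputable def pfdx (K : Type) [Field K] (d : ℕ) (k : Fin d) :
    FractionRing (MvPolynomial (Fin d) K) :=
  algebraMap (MvPolynomial (Fin d) K) (FractionRing (MvPolynomial (Fin d) K)) (MvPolynomial.X k)

theorem pfdx_indep (K : Type) [Field K] (d : ℕ) : AlgebraicIndependent K (pfdx K d) := by
  have h := MvPolynomial.algebraicIndependent_X (Fin d) K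
  exact h.map' (f := IsScalarTower.toAlgHom K (MvPolynomial (Fin d) K)
    (FractionRing (MvPolynomial (Fin d) K))) (IsFractionRing.injective _ _)

theorem pfd_algebraMap_C (K : Type) [Field K] (d : ℕ) (c : K) :
    algebraMap (MvPolynomial (Fin d) K) (FractionRing (MvPolynomial (Fin d) K))
      (MvPolynomial.C c) = algebraMap K _ c := by
  rw [← MvPolynomial.algebraMap_eq, ← IsScalarTower.algebraMap_apply]

theorem pfd_ell (K : Type) [Field K] (d : ℕ) (u : Matrix (Fin (d+1)) (Fin (d+1)) K) (k : Fin d) :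
    algebraMap (MvPolynomial (Fin d) K) (FractionRing (MvPolynomial (Fin d) K)) (PFDell K d u k) =
      pfdx K d k + (u (Fin.last d) k.castSucc • (1 : FractionRing (MvPolynomial (Fin d) K)) +
        ∑ i ∈ Finset.univ.filter (fun i => k < i), u i.castSucc k.castSucc • pfdx K d i) := by
  unfold PFDell
  rw [map_add, map_add, map_sum, add_assoc]
  simp only [map_mul, pfd_algebraMap_C, Algebra.smul_def, mul_one]
  rw [add_comm (∑ i ∈ _, _)]
  rfl

theorem pfd_ell_coeff (K : Type) [Field K] (d : ℕ) (u : Matrix (Fin (d+1)) (Fin (d+1)) K)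
    (k i : Fin d) (hi : k < i) :
    (PFDell K d u k).coeff (Finsupp.single i 1) = u i.castSucc k.castSucc := by
  classical
  unfold PFDell
  rw [MvPolynomial.coeff_add, MvPolynomial.coeff_add, MvPolynomial.coeff_sum]
  rw [Finset.sum_eq_single_of_mem i (by simp [hi])]
  · simp [MvPolynomial.coeff_C_mul, MvPolynomial.coeff_X, MvPolynomial.coeff_C,
      Finsupp.single_left_inj, hi.ne, eq_comm (a := (0 : Fin d →₀ ℕ))]
  · intro j _ hj
    simp [MvPolynomial.coeff_C_mul, MvPolynomial.coeff_X, Finsupp.single_left_inj, hj]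

theorem pfd_ell_coeff_zero (K : Type) [Field K] (d : ℕ) (u : Matrix (Fin (d+1)) (Fin (d+1)) K)
    (k : Fin d) :
    (PFDell K d u k).coeff 0 = u (Fin.last d) k.castSucc := by
  classical
  unfold PFDell
  rw [MvPolynomial.coeff_add, MvPolynomial.coeff_add, MvPolynomial.coeff_sum]
  simp [MvPolynomial.coeff_C_mul, MvPolynomial.coeff_X, MvPolynomial.coeff_C]

theorem pfd_exists_valid (K : Type) [Field K] (d : ℕ)
    (g : Fin d → ℤ × FractionRing (MvPolynomial (Fin d) K)) (hg : pfdG K (pfdx K d) g) :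
    ∃ p, PFDvalid K d p ∧ PFDPhi K d p.1 p.2 = ∏ k, (pfdx K d k + (g k).2) ^ (g k).1 := by
  have h : ∀ k, ∃ (a : K) (w : Fin d → K), (g k).2 =
      a • (1 : FractionRing (MvPolynomial (Fin d) K)) +
        ∑ i ∈ Finset.univ.filter (fun i => k < i), w i • pfdx K d i ∧
      (0 ≤ (g k).1 → a = 0 ∧ w = 0) := by
    intro k
    by_cases h0 : 0 ≤ (g k).1
    · exact ⟨0, 0, by simp [(hg k).2 h0], fun _ => ⟨rfl, rfl⟩⟩
    · have hk := (hg k).1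
      unfold pfdW at hk
      rw [Submodule.mem_span_insert] at hk
      obtain ⟨a, z, hz, e⟩ := hk
      have : Set.Ioi k = ((Finset.univ.filter (fun i => k < i) : Finset (Fin d)) : Set (Fin d)) := by
        ext; simp
      rw [this, Submodule.mem_span_image_finset_iff_exists_fun'] at hz
      obtain ⟨w, hw⟩ := hz
      exact ⟨a, w, by rw [e, hw], fun h => absurd h h0⟩
  choose a w haw h0 using h
  let u : Matrix (Fin (d+1)) (Fin (d+1)) K := fun i j =>
    if i = j then 1 else if hij : j < i then
      (Fin.lastCases (motive := fun _ => K) (a (j.castLT (by omega)))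
        (fun i' => w (j.castLT (by omega)) i') i) else 0
  refine ⟨(Fin.snoc (α := fun _ => ℤ) (fun k => (g k).1) (-∑ k, (g k).1), u), ⟨?_, ?_, ?_, ?_⟩, ?_⟩
  · rw [Fin.sum_univ_castSucc]
    simp
  · intro i; simp [u]
  · intro i j hij
    simp [u, hij.ne, hij.not_gt]
  · intro i j hij hj
    have hjd : j.val < d := by omega
    obtain ⟨k, rfl⟩ : ∃ k : Fin d, j = k.castSucc := ⟨j.castLT hjd, by simp⟩
    simp only [Fin.snoc_castSucc] at hj
    obtain ⟨h1, h2⟩ := h0 k hj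
    simp only [u, hij.ne', if_false, hij, dif_pos, Fin.castLT_castSucc, h1, h2]
    refine Fin.lastCases ?_ (fun i => ?_) i
    · simp
    · simp
  · unfold PFDPhi
    refine Finset.prod_congr rfl fun k _ => ?_
    rw [pfd_ell, haw]
    simp only [Fin.snoc_castSucc]
    congr 3
    · simp [u, (Fin.castSucc_lt_last k).ne', Fin.castSucc_lt_last k]
    · refine Finset.sum_congr rfl fun i hi => ?_
      have hi' : k < i := by simpa using hi
      simp [u, hi'.ne', hi']

theorem pfd_affine_mem (K : Type) [Field K] (d : ℕ) (q : MvPolynomial (Fin d) K)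
    (hq : q.totalDegree ≤ 1) :
    algebraMap (MvPolynomial (Fin d) K) (FractionRing (MvPolynomial (Fin d) K)) q ∈
      pfdV (K := K) (pfdx K d) := by
  rw [q.as_sum, map_sum]
  refine sum_mem fun m hm => ?_
  have h1 : m.degree ≤ 1 := (MvPolynomial.le_totalDegree hm).trans hq
  rw [← mul_one (MvPolynomial.coeff m q), ← MvPolynomial.C_mul_monomial, map_mul,
    pfd_algebraMap_C, ← Algebra.smul_def]
  apply Submodule.smul_mem
  apply Submodule.subset_span
  rcases Nat.le_one_iff_eq_zero_or_eq_one.1 h1 with h | h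
  · left
    rw [Finsupp.degree_eq_zero_iff] at h
    subst h
    simp
  · right
    obtain ⟨i, rfl⟩ : ∃ i, m = Finsupp.single i 1 := by
      have hm0 : m ≠ 0 := by rintro rfl; simp at h
      obtain ⟨i, hi⟩ := Finsupp.ne_iff.1 hm0
      have hle : Finsupp.single i 1 ≤ m := by
        rw [Finsupp.single_le_iff]
        exact Nat.one_le_iff_ne_zero.2 hi
      obtain ⟨m', rfl⟩ := exists_add_of_le hle
      refine ⟨i, ?_⟩
      rw [map_add, Finsupp.degree_single] at h
      have : m' = 0 := by
        rw [← Finsupp.degree_eq_zero_iff]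
        omega
      rw [this, add_zero]
    exact ⟨i, rfl⟩

theorem pfd_quot_mem (K : Type) [Field K] (d : ℕ) (P : MvPolynomial (Fin d) K)
    (l : List (MvPolynomial (Fin d) K)) (hl : ∀ q ∈ l, q.totalDegree ≤ 1) :
    algebraMap (MvPolynomial (Fin d) K) (FractionRing (MvPolynomial (Fin d) K)) P /
      algebraMap (MvPolynomial (Fin d) K) (FractionRing (MvPolynomial (Fin d) K)) l.prod ∈
      pfdA K (pfdx K d) := by
  rw [div_eq_mul_inv]
  refine mul_mem ?_ ?_
  · induction P using MvPolynomial.induction_on with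
    | C a => rw [pfd_algebraMap_C]; exact Subalgebra.algebraMap_mem _ _
    | add p q hp hq => rw [map_add]; exact add_mem hp hq
    | mul_X p i hp => rw [map_mul]; exact mul_mem hp (Algebra.subset_adjoin (Or.inl ⟨i, rfl⟩))
  · induction l with
    | nil => simp
    | cons q l ih =>
      rw [List.prod_cons, map_mul, mul_inv]
      exact mul_mem (pfdV_inv_mem _ (pfd_affine_mem K d q (hl q (by simp))))
        (ih fun q hq => hl q (by simp [hq]))

/-- Every P/Q in F, with Q a nonzero finite product of polynomials of
total degree at most one, is a finite K-linear combination of the functions Φ(μ,u)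
with Σ_k μ(k) = 0 and u ∈ U({k : μ(k) ≥ 0}); moreover this family (Φ(μ,u)) is
K-linearly independent, so the coefficients are unique. -/
theorem stmt_19 (K : Type) [Field K] [CharZero K] (d : ℕ) (hd : 1 ≤ d) :
    (∀ (P : MvPolynomial (Fin d) K) (l : List (MvPolynomial (Fin d) K)),
      (∀ q ∈ l, q.totalDegree ≤ 1) → l.prod ≠ 0 →
      ∃ A : ((Fin (d+1) → ℤ) × Matrix (Fin (d+1)) (Fin (d+1)) K) →₀ K,
        (∀ p ∈ A.support, PFDvalid K d p) ∧
        algebraMap (MvPolynomial (Fin d) K) (FractionRing (MvPolynomial (Fin d) K)) P /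
          algebraMap (MvPolynomial (Fin d) K) (FractionRing (MvPolynomial (Fin d) K)) l.prod
          = A.sum (fun p a => a • PFDPhi K d p.1 p.2)) ∧
    LinearIndependent K
      (fun p : {p : (Fin (d+1) → ℤ) × Matrix (Fin (d+1)) (Fin (d+1)) K // PFDvalid K d p} =>
        PFDPhi K d p.1.1 p.1.2) := by
  refine ⟨?_, ?_⟩
  · intro P l hl _
    have h := pfd_span (pfdx K d) (pfdx_indep K d) _ (pfd_quot_mem K d P l hl)
    have hsub : {y | ∃ g : Fin d → ℤ × FractionRing (MvPolynomial (Fin d) K),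
        pfdG K (pfdx K d) g ∧ y = ∏ k, (pfdx K d k + (g k).2) ^ (g k).1} ⊆
        (fun p : (Fin (d+1) → ℤ) × Matrix (Fin (d+1)) (Fin (d+1)) K => PFDPhi K d p.1 p.2) ''
          {p | PFDvalid K d p} := by
      rintro y ⟨g, hg, rfl⟩
      obtain ⟨p, hp, e⟩ := pfd_exists_valid K d g hg
      exact ⟨p, hp, e⟩
    have h' := Submodule.span_mono hsub h
    rw [Finsupp.mem_span_image_iff_linearCombination] at h'
    obtain ⟨A, hA, e⟩ := h'
    refine ⟨A, fun p hp => hA hp, ?_⟩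
    rw [← e, Finsupp.linearCombination_apply]
  · have h := pfd_linearIndependent (pfdx K d) (pfdx_indep K d)
    let G : {p : (Fin (d+1) → ℤ) × Matrix (Fin (d+1)) (Fin (d+1)) K // PFDvalid K d p} →
        Fin d → ℤ × FractionRing (MvPolynomial (Fin d) K) := fun p k =>
      (p.1.1 k.castSucc, p.1.2 (Fin.last d) k.castSucc •
        (1 : FractionRing (MvPolynomial (Fin d) K)) +
        ∑ i ∈ Finset.univ.filter (fun i => k < i), p.1.2 i.castSucc k.castSucc • pfdx K d i)
    have hG : ∀ p, pfdG K (pfdx K d) (G p) := by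
      rintro ⟨p, hsum, h1, h2, h3⟩ k
      refine ⟨add_mem (Submodule.smul_mem _ _ (Submodule.subset_span (Set.mem_insert _ _)))
        (sum_mem fun i hi => Submodule.smul_mem _ _ (Submodule.subset_span
          (Set.mem_insert_of_mem _ ⟨i, by simpa using hi, rfl⟩))), fun h0 => ?_⟩
      simp only [G] at h0 ⊢
      rw [h3 _ _ (Fin.castSucc_lt_last k) h0, zero_smul, zero_add]
      refine Finset.sum_eq_zero fun i hi => ?_
      have hi' : k < i := by simpa using hi
      rw [h3 _ _ (Fin.castSucc_lt_castSucc_iff.2 hi') h0, zero_smul]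
    have hinj : Function.Injective (fun p => (⟨G p, hG p⟩ :
        {g : Fin d → ℤ × FractionRing (MvPolynomial (Fin d) K) // pfdG K (pfdx K d) g})) := by
      rintro ⟨⟨μ, u⟩, hsum, h1, h2, h3⟩ ⟨⟨μ', u'⟩, hsum', h1', h2', h3'⟩ hGG
      have hk : ∀ k, _ := fun k => congrFun (Subtype.mk.inj hGG) k
      have hμ : ∀ k : Fin d, μ k.castSucc = μ' k.castSucc := fun k => congrArg Prod.fst (hk k)
      have hell : ∀ k : Fin d, PFDell K d u k = PFDell K d u' k := by
        intro k
        apply IsFractionRing.injective (MvPolynomial (Fin d) K)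
          (FractionRing (MvPolynomial (Fin d) K))
        rw [pfd_ell, pfd_ell]
        congr 1
        exact congrArg Prod.snd (hk k)
      apply Subtype.ext
      refine Prod.ext ?_ ?_
      · funext j
        refine Fin.lastCases ?_ hμ j
        simp only [Fin.sum_univ_castSucc] at hsum hsum'
        have := Finset.sum_congr (rfl : (Finset.univ : Finset (Fin d)) = Finset.univ)
          (fun k _ => hμ k)
        simp only
        linarith
      · funext i j
        rcases lt_trichotomy i j with hij | hij | hij
        · exact (h2 i j hij).trans (h2' i j hij).symm
        · subst hij
          exact (h1 i).trans (h1' i).symm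
        · have hjd : j.val < d := by omega
          obtain ⟨k, rfl⟩ : ∃ k : Fin d, j = k.castSucc := ⟨j.castLT hjd, by simp⟩
          rcases Fin.eq_castSucc_or_eq_last i with ⟨i, rfl⟩ | rfl
          · have hki : k < i := Fin.castSucc_lt_castSucc_iff.1 hij
            change u _ _ = u' _ _
            rw [← pfd_ell_coeff K d u k i hki, hell, pfd_ell_coeff K d u' k i hki]
          · change u _ _ = u' _ _
            rw [← pfd_ell_coeff_zero K d u k, hell, pfd_ell_coeff_zero K d u' k]
    have h' := h.comp _ hinj
    have e : (fun p : {p : (Fin (d+1) → ℤ) × Matrix (Fin (d+1)) (Fin (d+1)) K //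
        PFDvalid K d p} => PFDPhi K d p.1.1 p.1.2) =
        ((fun g : {g : Fin d → ℤ × FractionRing (MvPolynomial (Fin d) K) //
          pfdG K (pfdx K d) g} => ∏ k, (pfdx K d k + (g.1 k).2) ^ (g.1 k).1) ∘
          fun p => ⟨G p, hG p⟩) := by
      funext p
      simp only [Function.comp, PFDPhi, pfd_ell, G]
    rw [e]
    exact h'
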